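/- Let (A_m)_{m≥1} be a nondecreasing sequence of Borel subsets of C and let K be a compact subset of C with ⋃_{m=1}^∞ A_m = K. Then μ(A_m) converges to μ(K) = φ(K) as m → ∞. -/

import Mathlib

open MeasureTheory Matrix Set Filter Topology
open scoped ENNReal

noncomputable section

/-- The space `C` of continuous functions on `[0,1]` vanishing at `0`,
with the supremum metric (inherited from `C([0,1], ℝ)`). -/
abbrev Cz : Type := {f : C(Set.Icc (0:ℝ) 1, ℝ) // f ⟨0, ⟨le_refl 0, zero_le_one⟩⟩ = 0}

/-- The projection `π_n : C → ℝ^n`, `x ↦ (x(t_1), …, x(t_n))`. -/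
def proj (t : ℕ → ℝ) (ht : ∀ k, t k ∈ Set.Ioc (0:ℝ) 1) (n : ℕ) (x : Cz) : Fin n → ℝ :=
  fun i => (x : C(Set.Icc (0:ℝ) 1, ℝ)) ⟨t i, Set.Ioc_subset_Icc_self (ht i)⟩

/-- The covariance matrix `M_n` with entries `min (t j) (t r)`. -/
def covM (t : ℕ → ℝ) (n : ℕ) : Matrix (Fin n) (Fin n) ℝ :=
  Matrix.of fun j r => min (t (j : ℕ)) (t (r : ℕ))

/-- The centered Gaussian measure on `ℝ^n` with (positive definite) covariance matrix `M`:
the measure with density `u ↦ ((2π)^n det M)^{-1/2} exp (-⟨u, M⁻¹ u⟩ / 2)` w.r.t. Lebesgue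
measure. -/
def gauss (n : ℕ) (M : Matrix (Fin n) (Fin n) ℝ) : Measure (Fin n → ℝ) :=
  volume.withDensity fun u =>
    ENNReal.ofReal ((((2 * Real.pi) ^ n * M.det) ^ (-(1:ℝ)/2 : ℝ)) *
      Real.exp (-(u ⬝ᵥ M⁻¹.mulVec u) / 2))

/-- `φ(K) = inf_{n ≥ 1} ν_n (π_n(K))`. -/
def phi (t : ℕ → ℝ) (ht : ∀ k, t k ∈ Set.Ioc (0:ℝ) 1) (K : Set Cz) : ℝ≥0∞ :=
  ⨅ n : ℕ, gauss (n+1) (covM t (n+1)) (proj t ht (n+1) '' K)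

/-- `μ(A) = sup {φ(K) : K ⊆ A, K compact}`. -/
def mu (t : ℕ → ℝ) (ht : ∀ k, t k ∈ Set.Ioc (0:ℝ) 1) (A : Set Cz) : ℝ≥0∞ :=
  ⨆ (K : Set Cz) (_ : K ⊆ A) (_ : IsCompact K), phi t ht K

instance : MeasurableSpace Cz := borel Cz
instance : BorelSpace Cz := ⟨rfl⟩

/-!
The measures `gauss n (covM t n)` are the marginals of a single probability measure on `ℕ → ℝ`.
Indeed `min s r` is the inner product of the indicators of `(0, s]` and `(0, r]` in `L²(ℝ)`, so
`covM t n` is a Gram matrix, and the Gram–Schmidt coefficients of these indicators turn an i.i.d.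
standard normal sequence into a sequence with the required finite-dimensional laws.
Density of the times makes evaluation along `t` a continuous injection `Cz → (ℕ → ℝ)` between
Polish spaces, so the law of the sequence pulls back to a finite Borel measure on `Cz`. This measure
agrees with `phi` on compact sets because a compact set of sequences is the decreasing intersection
of the cylinders over its projections, and hence, being inner regular, with `mu` on Borel sets.
Continuity from below of measures finishes the proof.
-/

section Measure

lemma map_withDensity_comp {α β : Type*} [MeasurableSpace α] [MeasurableSpace β] (μ : Measure α)
    {T : α → β} (hT : Measurable T) {g : β → ℝ≥0∞} (hg : Measurable g) :
    (μ.withDensity (g ∘ T)).map T = (μ.map T).withDensity g := by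
  ext s hs
  rw [Measure.map_apply hT hs, withDensity_apply _ (hT hs), withDensity_apply _ hs,
    setLIntegral_map hs hg hT]
  rfl

lemma pi_withDensity_ofReal {ι : Type*} [Fintype ι] {α : ι → Type*} [∀ i, MeasurableSpace (α i)]
    (μ : ∀ i, Measure (α i)) [∀ i, SigmaFinite (μ i)] {f : ∀ i, α i → ℝ}
    (hf : ∀ i, Integrable (f i) (μ i)) (hf₀ : ∀ i x, 0 ≤ f i x) :
    Measure.pi (fun i => (μ i).withDensity fun x => ENNReal.ofReal (f i x)) =
      (Measure.pi μ).withDensity fun x => ENNReal.ofReal (∏ i, f i (x i)) := by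
  refine Measure.pi_eq fun s hs => ?_
  have hfs : ∀ i, Integrable (f i) ((μ i).restrict (s i)) := fun i => (hf i).restrict
  rw [withDensity_apply _ (MeasurableSet.univ_pi hs), Measure.restrict_pi_pi,
    ← ofReal_integral_eq_lintegral_ofReal (Integrable.fintype_prod_dep hfs)
      (ae_of_all _ fun x => Finset.prod_nonneg fun i _ => hf₀ i (x i)),
    integral_fintype_prod_eq_prod,
    ENNReal.ofReal_prod_of_nonneg fun i _ => integral_nonneg (hf₀ i)]
  refine Finset.prod_congr rfl fun i _ => ?_
  rw [withDensity_apply _ (hs i),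
    ofReal_integral_eq_lintegral_ofReal (hfs i) (ae_of_all _ (hf₀ i))]

lemma infinitePi_map_precomp {ι κ : Type*} [Fintype κ] {α : ι → Type*}
    [∀ i, MeasurableSpace (α i)] (μ : ∀ i, Measure (α i)) [∀ i, IsProbabilityMeasure (μ i)]
    {g : κ → ι} (hg : Function.Injective g) :
    (Measure.infinitePi μ).map (fun z k => z (g k)) = Measure.pi fun k => μ (g k) := by
  have hindep : ProbabilityTheory.iIndepFun (fun k (z : ∀ i, α i) => z (g k))
      (Measure.infinitePi μ) :=
    (ProbabilityTheory.iIndepFun_infinitePi (X := fun i => (id : α i → α i))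
      fun _ => measurable_id).precomp hg
  rw [hindep.map_fun_eq_pi_map fun k => (measurable_pi_apply (g k)).aemeasurable]
  exact congrArg Measure.pi (funext fun k => Measure.infinitePi_map_eval μ (g k))

end Measure

section FirstCoords

variable {X : Type*}

/-- The projection of a sequence to the tuple of its first `n` terms. -/
def firstCoords (n : ℕ) (u : ℕ → X) : Fin n → X := fun i => u i

lemma antitone_preimage_image_firstCoords (S : Set (ℕ → X)) :
    Antitone fun n => firstCoords n ⁻¹' (firstCoords n '' S) := by
  rintro m n hmn u ⟨v, hv, hvu⟩
  exact ⟨v, hv, funext fun i => congrFun hvu (i.castLE hmn)⟩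

lemma iInter_preimage_image_firstCoords [TopologicalSpace X] {S : Set (ℕ → X)} (hS : IsClosed S) :
    ⋂ n, firstCoords (n + 1) ⁻¹' (firstCoords (n + 1) '' S) = S := by
  refine Subset.antisymm (fun u hu => ?_) (subset_iInter fun n => subset_preimage_image _ S)
  choose v hvS hv using mem_iInter.1 hu
  refine hS.mem_of_tendsto (f := v) (b := atTop) (tendsto_pi_nhds.2 fun k => ?_)
    (Eventually.of_forall hvS)
  refine tendsto_const_nhds.congr' ?_
  filter_upwards [eventually_ge_atTop k] with n hkn
  exact (congrFun (hv n) ⟨k, Nat.lt_succ_of_le hkn⟩).symm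

lemma continuous_firstCoords [TopologicalSpace X] (n : ℕ) :
    Continuous (firstCoords n : (ℕ → X) → Fin n → X) :=
  continuous_pi fun i => continuous_apply (i : ℕ)

variable [MeasurableSpace X]

@[fun_prop]
lemma measurable_firstCoords (n : ℕ) : Measurable (firstCoords n : (ℕ → X) → Fin n → X) :=
  measurable_pi_lambda _ fun i => measurable_pi_apply (i : ℕ)

lemma measure_eq_iInf_map_firstCoords [TopologicalSpace X] [T2Space X] [SecondCountableTopology X]
    [BorelSpace X] (P : Measure (ℕ → X)) [IsFiniteMeasure P] {S : Set (ℕ → X)} (hS : IsCompact S) :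
    P S = ⨅ n, P.map (firstCoords (n + 1)) (firstCoords (n + 1) '' S) := by
  have hmeas : ∀ n, MeasurableSet (firstCoords (n + 1) '' S) := fun n =>
    (hS.image (continuous_firstCoords _)).measurableSet
  have hanti : Antitone fun n => firstCoords (n + 1) ⁻¹' (firstCoords (n + 1) '' S) :=
    fun _ _ hmn => antitone_preimage_image_firstCoords S (Nat.succ_le_succ hmn)
  conv_lhs => rw [← iInter_preimage_image_firstCoords hS.isClosed]
  rw [hanti.measure_iInter
    (fun n => (measurable_firstCoords _ (hmeas n)).nullMeasurableSet) ⟨0, measure_ne_top _ _⟩]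
  exact iInf_congr fun n => (Measure.map_apply (measurable_firstCoords _) (hmeas n)).symm

end FirstCoords

section GaussianDensity

variable {n : ℕ}

/-- The density of `gauss n M` with respect to Lebesgue measure, as a real-valued function. -/
def gaussDensity (M : Matrix (Fin n) (Fin n) ℝ) (u : Fin n → ℝ) : ℝ :=
  (((2 * Real.pi) ^ n * M.det) ^ (-(1 : ℝ) / 2)) * Real.exp (-(u ⬝ᵥ M⁻¹.mulVec u) / 2)

lemma continuous_gaussDensity (M : Matrix (Fin n) (Fin n) ℝ) : Continuous (gaussDensity M) := by
  have hquad : Continuous fun u : Fin n → ℝ => u ⬝ᵥ M⁻¹.mulVec u :=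
    continuous_id.dotProduct (continuous_const.matrix_mulVec continuous_id)
  exact continuous_const.mul (Real.continuous_exp.comp (hquad.neg.div_const 2))

lemma mulVec_dotProduct_inv_mul_transpose_mulVec {ι : Type*} [Fintype ι] [DecidableEq ι]
    {L : Matrix ι ι ℝ} (hL : L.det ≠ 0) (z : ι → ℝ) :
    L *ᵥ z ⬝ᵥ (L * Lᵀ)⁻¹ *ᵥ (L *ᵥ z) = z ⬝ᵥ z := by
  have hdet : IsUnit L.det := isUnit_iff_ne_zero.2 hL
  rw [Matrix.mul_inv_rev, mulVec_mulVec, Matrix.mul_assoc, nonsing_inv_mul _ hdet, Matrix.mul_one,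
    ← transpose_nonsing_inv, mulVec_transpose, dotProduct_comm, ← dotProduct_mulVec,
    mulVec_mulVec, nonsing_inv_mul _ hdet, one_mulVec]

lemma two_pi_pow_mul_det_mul_transpose_rpow (L : Matrix (Fin n) (Fin n) ℝ) :
    ((2 * Real.pi) ^ n * (L * Lᵀ).det) ^ (-(1 : ℝ) / 2) =
      (√(2 * Real.pi))⁻¹ ^ n * |L.det|⁻¹ := by
  have hsq : (2 * Real.pi) ^ n * (L * Lᵀ).det = (√(2 * Real.pi) ^ n * |L.det|) ^ 2 := by
    rw [det_mul, det_transpose, mul_pow (√(2 * Real.pi) ^ n), pow_right_comm,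
      Real.sq_sqrt (by positivity), sq_abs, sq]
  rw [hsq, neg_div, Real.rpow_neg (by positivity), ← Real.sqrt_eq_rpow,
    Real.sqrt_sq (by positivity), mul_inv, inv_pow]

lemma abs_det_mul_gaussDensity_mulVec {L : Matrix (Fin n) (Fin n) ℝ} (hL : L.det ≠ 0)
    (z : Fin n → ℝ) :
    |L.det| * gaussDensity (L * Lᵀ) (L *ᵥ z) =
      ∏ i, ProbabilityTheory.gaussianPDFReal 0 1 (z i) := by
  have hdet : |L.det| ≠ 0 := abs_ne_zero.2 hL
  have hexp : ∏ i, Real.exp (-(z i) ^ 2 / 2) = Real.exp (-(z ⬝ᵥ z) / 2) := by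
    simp only [← Real.exp_sum, dotProduct, ← sq, ← Finset.sum_div, Finset.sum_neg_distrib]
  simp only [gaussDensity, mulVec_dotProduct_inv_mul_transpose_mulVec hL,
    two_pi_pow_mul_det_mul_transpose_rpow, ProbabilityTheory.gaussianPDFReal,
    Finset.prod_mul_distrib, Finset.prod_const, Finset.card_univ, Fintype.card_fin, sub_zero,
    NNReal.coe_one, mul_one, hexp]
  field_simp

lemma pi_gaussianReal_eq_withDensity (ι : Type*) [Fintype ι] :
    Measure.pi (fun _ : ι => ProbabilityTheory.gaussianReal 0 1) =
      volume.withDensity fun z : ι → ℝ =>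
        ENNReal.ofReal (∏ i, ProbabilityTheory.gaussianPDFReal 0 1 (z i)) := by
  rw [ProbabilityTheory.gaussianReal_of_var_ne_zero _ one_ne_zero]
  exact pi_withDensity_ofReal (fun _ : ι => volume)
    (fun _ => ProbabilityTheory.integrable_gaussianPDFReal 0 1)
    fun _ => ProbabilityTheory.gaussianPDFReal_nonneg 0 1

lemma map_mulVec_pi_gaussianReal {L : Matrix (Fin n) (Fin n) ℝ} (hL : L.det ≠ 0) :
    (Measure.pi fun _ : Fin n => ProbabilityTheory.gaussianReal 0 1).map (L *ᵥ ·) =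
      gauss n (L * Lᵀ) := by
  let c : ℝ≥0∞ := ENNReal.ofReal |L.det|
  let g : (Fin n → ℝ) → ℝ≥0∞ := fun u => ENNReal.ofReal (gaussDensity (L * Lᵀ) u)
  have hg : Measurable g := (continuous_gaussDensity _).measurable.ennreal_ofReal
  have hmulVec : Measurable (L *ᵥ · : (Fin n → ℝ) → Fin n → ℝ) :=
    (continuous_const.matrix_mulVec continuous_id).measurable
  have hvol : (volume : Measure (Fin n → ℝ)).map (L *ᵥ ·) = c⁻¹ • volume := by
    rw [← ENNReal.ofReal_inv_of_pos (abs_pos.2 hL), ← abs_inv]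
    exact Real.map_matrix_volume_pi_eq_smul_volume_pi hL
  have hc : c⁻¹ * c = 1 :=
    ENNReal.inv_mul_cancel (ENNReal.ofReal_pos.2 (abs_pos.2 hL)).ne' ENNReal.ofReal_ne_top
  have hdensity : (fun z => ENNReal.ofReal (∏ i, ProbabilityTheory.gaussianPDFReal 0 1 (z i))) =
      (c • g) ∘ (L *ᵥ ·) := by
    funext z
    rw [← abs_det_mul_gaussDensity_mulVec hL, ENNReal.ofReal_mul (abs_nonneg _)]
    rfl
  rw [pi_gaussianReal_eq_withDensity, hdensity, map_withDensity_comp _ hmulVec (hg.const_smul c),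
    hvol, withDensity_smul_measure, withDensity_smul _ hg, smul_smul, hc, one_smul]
  rfl

end GaussianDensity

section Isonormal

open InnerProductSpace

lemma inner_gramSchmidt_self {𝕜 E ι : Type*} [RCLike 𝕜] [NormedAddCommGroup E]
    [InnerProductSpace 𝕜 E] [LinearOrder ι] [LocallyFiniteOrderBot ι] [WellFoundedLT ι]
    (f : ι → E) (k : ι) :
    inner 𝕜 (gramSchmidt 𝕜 f k) (f k) = (‖gramSchmidt 𝕜 f k‖ : 𝕜) ^ 2 := by
  have horth : ∀ i ∈ Finset.Iio k,
      inner 𝕜 (gramSchmidt 𝕜 f k) ((inner 𝕜 (gramSchmidt 𝕜 f i) (f k) /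
        (‖gramSchmidt 𝕜 f i‖ : 𝕜) ^ 2) • gramSchmidt 𝕜 f i) = 0 := fun i hi => by
    rw [inner_smul_right, gramSchmidt_orthogonal 𝕜 f (Finset.mem_Iio.1 hi).ne', mul_zero]
  conv_lhs => rw [gramSchmidt_def'' 𝕜 f k]
  rw [inner_add_right, inner_sum, Finset.sum_eq_zero horth, add_zero, inner_self_eq_norm_sq_to_K]

lemma sum_Iic_inner_gramSchmidtNormed_smul {𝕜 E ι : Type*} [RCLike 𝕜] [NormedAddCommGroup E]
    [InnerProductSpace 𝕜 E] [LinearOrder ι] [LocallyFiniteOrderBot ι] [WellFoundedLT ι]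
    (f : ι → E) (k : ι) :
    ∑ j ∈ Finset.Iic k, inner 𝕜 (gramSchmidtNormed 𝕜 f j) (f k) • gramSchmidtNormed 𝕜 f j =
      f k := by
  have hterm : ∀ j, inner 𝕜 (gramSchmidtNormed 𝕜 f j) (f k) • gramSchmidtNormed 𝕜 f j =
      (inner 𝕜 (gramSchmidt 𝕜 f j) (f k) / (‖gramSchmidt 𝕜 f j‖ : 𝕜) ^ 2) •
        gramSchmidt 𝕜 f j := fun j => by
    simp only [gramSchmidtNormed, inner_smul_left, smul_smul, map_inv₀, RCLike.conj_ofReal]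
    congr 1
    ring
  have hlast : (inner 𝕜 (gramSchmidt 𝕜 f k) (f k) / (‖gramSchmidt 𝕜 f k‖ : 𝕜) ^ 2) •
      gramSchmidt 𝕜 f k = gramSchmidt 𝕜 f k := by
    rcases eq_or_ne (gramSchmidt 𝕜 f k) 0 with hzero | hne
    · rw [hzero, smul_zero]
    · rw [inner_gramSchmidt_self, div_self (by simpa using hne), one_smul]
  rw [← Finset.Iio_insert, Finset.sum_insert (by simp)]
  simp only [hterm]
  rw [hlast]
  exact (gramSchmidt_def'' 𝕜 f k).symm

variable {E : Type*} [NormedAddCommGroup E] [InnerProductSpace ℝ E]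

/-- The coordinate of `f k` along the `j`-th vector of the orthonormal system obtained from `f` by
the Gram–Schmidt process. -/
def gramSchmidtCoeff (f : ℕ → E) (k j : ℕ) : ℝ := inner ℝ (gramSchmidtNormed ℝ f j) (f k)

lemma gramSchmidtCoeff_of_lt (f : ℕ → E) {k j : ℕ} (hkj : k < j) : gramSchmidtCoeff f k j = 0 := by
  rw [gramSchmidtCoeff, gramSchmidtNormed, inner_smul_left, gramSchmidt_inv_triangular ℝ f hkj,
    mul_zero]

lemma sum_fin_eq_sum_Iic {A : Type*} [AddCommMonoid A] {n : ℕ} (i : Fin n) {a : ℕ → A}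
    (ha : ∀ j, (i : ℕ) < j → a j = 0) : ∑ j : Fin n, a j = ∑ j ∈ Finset.Iic (i : ℕ), a j := by
  rw [← Finset.sum_range a]
  refine (Finset.sum_subset (fun j hj => ?_) fun j _ hj => ha j (by simpa using hj)).symm
  exact Finset.mem_range.2 ((Finset.mem_Iic.1 hj).trans_lt i.2)

/-- The lower triangular Cholesky factor of the Gram matrix of `f 0, …, f (n - 1)`. -/
def gramSchmidtMatrix (f : ℕ → E) (n : ℕ) : Matrix (Fin n) (Fin n) ℝ :=
  Matrix.of fun k j => gramSchmidtCoeff f k j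

lemma gramSchmidtMatrix_mul_transpose {f : ℕ → E} (hf : LinearIndependent ℝ f) (n : ℕ) :
    gramSchmidtMatrix f n * (gramSchmidtMatrix f n)ᵀ = gram ℝ fun i : Fin n => f i := by
  have hexpand : ∀ i : Fin n,
      ∑ j : Fin n, gramSchmidtCoeff f i j • gramSchmidtNormed ℝ f j = f i := fun i => by
    rw [sum_fin_eq_sum_Iic i (a := fun j => gramSchmidtCoeff f i j • gramSchmidtNormed ℝ f j)
      fun j hij => by rw [gramSchmidtCoeff_of_lt f hij, zero_smul]]
    exact sum_Iic_inner_gramSchmidtNormed_smul f i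
  have horth : Orthonormal ℝ fun j : Fin n => gramSchmidtNormed ℝ f j :=
    (gramSchmidtNormed_orthonormal hf).comp _ Fin.val_injective
  ext i k
  rw [gram_apply, ← hexpand i, ← hexpand k, horth.inner_sum]
  rfl

lemma det_gramSchmidtMatrix_ne_zero {f : ℕ → E} (hf : LinearIndependent ℝ f) (n : ℕ) :
    (gramSchmidtMatrix f n).det ≠ 0 := by
  have hgram : (gram ℝ fun i : Fin n => f i).det ≠ 0 :=
    det_gram_ne_zero_iff_linearIndependent.2 (hf.comp _ Fin.val_injective)
  rw [← gramSchmidtMatrix_mul_transpose hf, det_mul] at hgram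
  exact left_ne_zero_of_mul hgram

/-- The linear map sending coordinates `z` to the sequence `k ↦ ∑ j, ⟪e j, f k⟫ * z j`, where `e`
is the Gram–Schmidt orthonormalization of `f`; the terms with `k < j` vanish. -/
def gramSchmidtTransform (f : ℕ → E) (z : ℕ → ℝ) (k : ℕ) : ℝ :=
  ∑ j ∈ Finset.Iic k, gramSchmidtCoeff f k j * z j

@[fun_prop]
lemma measurable_gramSchmidtTransform (f : ℕ → E) : Measurable (gramSchmidtTransform f) :=
  measurable_pi_lambda _ fun _ =>
    Finset.measurable_sum _ fun j _ => (measurable_pi_apply j).const_mul _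

lemma firstCoords_gramSchmidtTransform (f : ℕ → E) (n : ℕ) (z : ℕ → ℝ) :
    firstCoords n (gramSchmidtTransform f z) = gramSchmidtMatrix f n *ᵥ firstCoords n z :=
  funext fun i => (sum_fin_eq_sum_Iic i (a := fun j => gramSchmidtCoeff f i j * z j)
    fun j hij => by rw [gramSchmidtCoeff_of_lt f hij, zero_mul]).symm

/-- The law of a centered Gaussian sequence whose `k`-th and `r`-th
terms have covariance `⟪f k, f r⟫`. -/
def isonormalLaw (f : ℕ → E) : Measure (ℕ → ℝ) :=
  (Measure.infinitePi fun _ : ℕ => ProbabilityTheory.gaussianReal 0 1).map (gramSchmidtTransform f)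

instance (f : ℕ → E) : IsProbabilityMeasure (isonormalLaw f) :=
  Measure.isProbabilityMeasure_map (measurable_gramSchmidtTransform f).aemeasurable

lemma isonormalLaw_map_firstCoords {f : ℕ → E} (hf : LinearIndependent ℝ f) (n : ℕ) :
    (isonormalLaw f).map (firstCoords n) = gauss n (gram ℝ fun i : Fin n => f i) := by
  have hmulVec : Measurable (gramSchmidtMatrix f n *ᵥ · : (Fin n → ℝ) → Fin n → ℝ) :=
    (continuous_const.matrix_mulVec continuous_id).measurable
  have hcomm : firstCoords n ∘ gramSchmidtTransform f =
      (gramSchmidtMatrix f n *ᵥ ·) ∘ firstCoords n :=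
    funext (firstCoords_gramSchmidtTransform f n)
  rw [isonormalLaw, Measure.map_map (by fun_prop) (by fun_prop), hcomm,
    ← Measure.map_map hmulVec (by fun_prop)]
  unfold firstCoords
  rw [infinitePi_map_precomp _ Fin.val_injective,
    map_mulVec_pi_gaussianReal (det_gramSchmidtMatrix_ne_zero hf n),
    gramSchmidtMatrix_mul_transpose hf]

end Isonormal

section BrownianCovariance

/-- The indicator of `(0, s]` as an element of `L²(ℝ)`. -/
def indicatorIoc (s : ℝ) : Lp ℝ 2 (volume : Measure ℝ) :=
  indicatorConstLp 2 (measurableSet_Ioc (a := (0 : ℝ)) (b := s)) (by simp) 1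

lemma inner_indicatorIoc {s r : ℝ} (hs : 0 ≤ s) (hr : 0 ≤ r) :
    inner ℝ (indicatorIoc s) (indicatorIoc r) = min s r := by
  rw [indicatorIoc, indicatorIoc, L2.real_inner_indicatorConstLp_one_indicatorConstLp_one _ _
    measure_Ioc_lt_top.ne measure_Ioc_lt_top.ne, Ioc_inter_Ioc]
  simp [hs, hr]

lemma min_second_difference_self {a h : ℝ} (hh : 0 ≤ h) :
    min (a + h) a + min (a - h) a - 2 * min a a = -h := by
  rw [min_eq_right (by linarith), min_eq_left (by linarith), min_self]
  ring

lemma min_second_difference_of_le_abs_sub {a h r : ℝ} (hh : 0 ≤ h) (har : h ≤ |r - a|) :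
    min (a + h) r + min (a - h) r - 2 * min a r = 0 := by
  rcases le_abs.1 har with hright | hleft
  · rw [min_eq_left (by linarith), min_eq_left (by linarith), min_eq_left (by linarith)]
    ring
  · rw [min_eq_right (by linarith), min_eq_right (by linarith), min_eq_right (by linarith)]
    ring

lemma exists_pos_le_abs_sub {ι : Type*} {t : ι → ℝ} (htinj : Function.Injective t) {k : ι}
    (hk : 0 < t k) (s : Finset ι) :
    ∃ h, 0 < h ∧ h ≤ t k ∧ ∀ i ∈ s, i ≠ k → h ≤ |t i - t k| := by
  have hsmall : ∀ᶠ h in 𝓝[>] (0 : ℝ), ∀ i ∈ s, i ≠ k → h ≤ |t i - t k| := by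
    refine s.eventually_all.2 fun i _ => eventually_imp_distrib_left.2 fun hik => ?_
    exact eventually_nhdsWithin_of_eventually_nhds
      (eventually_le_nhds (abs_pos.2 (sub_ne_zero.2 (htinj.ne hik))))
  exact (eventually_mem_nhdsWithin.and ((eventually_nhdsWithin_of_eventually_nhds
    (eventually_le_nhds hk)).and hsmall)).exists

-- Pairing with `indicatorIoc (t k + h) + indicatorIoc (t k - h) - 2 • indicatorIoc (t k)` for small
-- `h` isolates the `k`-th coefficient, since `min · r` is affine off `r`.
lemma linearIndependent_indicatorIoc {ι : Type*} {t : ι → ℝ} (ht : ∀ k, 0 < t k)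
    (htinj : Function.Injective t) : LinearIndependent ℝ fun k => indicatorIoc (t k) := by
  rw [linearIndependent_iff']
  intro s c hc k hk
  obtain ⟨h, hpos, hle, hsep⟩ := exists_pos_le_abs_sub htinj (ht k) s
  let w := indicatorIoc (t k + h) + indicatorIoc (t k - h) - (2 : ℝ) • indicatorIoc (t k)
  have hw : ∀ i, inner ℝ w (indicatorIoc (t i)) =
      min (t k + h) (t i) + min (t k - h) (t i) - 2 * min (t k) (t i) := fun i => by
    rw [inner_sub_left, inner_add_left, inner_smul_left,
      inner_indicatorIoc (by linarith [ht k]) (ht i).le,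
      inner_indicatorIoc (by linarith) (ht i).le, inner_indicatorIoc (ht k).le (ht i).le,
      conj_trivial]
  have hisolate : inner ℝ w (∑ i ∈ s, c i • indicatorIoc (t i)) = c k * -h := by
    rw [inner_sum, Finset.sum_eq_single_of_mem k hk fun i hi hik => ?_]
    · rw [inner_smul_right, hw, min_second_difference_self hpos.le]
    · rw [inner_smul_right, hw, min_second_difference_of_le_abs_sub hpos.le (hsep i hi hik),
        mul_zero]
  rw [hc, inner_zero_right] at hisolate
  exact (mul_eq_zero.1 hisolate.symm).resolve_right (neg_ne_zero.2 hpos.ne')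

lemma gram_indicatorIoc_eq_covM {t : ℕ → ℝ} (ht : ∀ k, 0 ≤ t k) (n : ℕ) :
    gram ℝ (fun i : Fin n => indicatorIoc (t i)) = covM t n :=
  Matrix.ext fun j r => inner_indicatorIoc (ht j) (ht r)

/-- The law on `ℕ → ℝ` of Brownian motion sampled at the times `t`. -/
def brownianLaw (t : ℕ → ℝ) : Measure (ℕ → ℝ) := isonormalLaw fun k => indicatorIoc (t k)

instance (t : ℕ → ℝ) : IsProbabilityMeasure (brownianLaw t) :=
  inferInstanceAs (IsProbabilityMeasure (isonormalLaw _))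

lemma brownianLaw_map_firstCoords {t : ℕ → ℝ} (ht : ∀ k, 0 < t k) (htinj : Function.Injective t)
    (n : ℕ) : (brownianLaw t).map (firstCoords n) = gauss n (covM t n) := by
  rw [brownianLaw, isonormalLaw_map_firstCoords (linearIndependent_indicatorIoc ht htinj),
    gram_indicatorIoc_eq_covM fun k => (ht k).le]

end BrownianCovariance

section Wiener

instance : PolishSpace Cz :=
  (isClosed_eq (continuous_eval_const _) continuous_const :
    IsClosed {f : C(Set.Icc (0 : ℝ) 1, ℝ) | f ⟨0, ⟨le_refl 0, zero_le_one⟩⟩ = 0}).polishSpace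

variable {t : ℕ → ℝ} (ht : ∀ k, t k ∈ Set.Ioc (0 : ℝ) 1)

/-- The values of a path along the whole sequence of times `t`; its first `n` terms form
`proj t ht n`. -/
def evalSeq (x : Cz) : ℕ → ℝ := fun k => x.1 ⟨t k, Set.Ioc_subset_Icc_self (ht k)⟩

lemma firstCoords_image_evalSeq (n : ℕ) (K : Set Cz) :
    firstCoords n '' (evalSeq ht '' K) = proj t ht n '' K :=
  image_image _ _ _

lemma continuous_evalSeq : Continuous (evalSeq ht) :=
  continuous_pi fun _ => (continuous_eval_const _).comp continuous_subtype_val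

lemma injective_evalSeq (htdense : Set.Icc (0 : ℝ) 1 ⊆ closure (Set.range t)) :
    Function.Injective (evalSeq ht) := by
  have hdense : DenseRange fun k =>
      (⟨t k, Set.Ioc_subset_Icc_self (ht k)⟩ : Set.Icc (0 : ℝ) 1) := by
    intro p
    rw [closure_subtype, ← range_comp]
    exact htdense p.2
  intro x y hxy
  exact Subtype.ext (ContinuousMap.coe_injective
    (hdense.equalizer x.1.continuous y.1.continuous hxy))

lemma measurableEmbedding_evalSeq (htdense : Set.Icc (0 : ℝ) 1 ⊆ closure (Set.range t)) :
    MeasurableEmbedding (evalSeq ht) :=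
  (continuous_evalSeq ht).measurableEmbedding (injective_evalSeq ht htdense)

lemma phi_eq_brownianLaw (htinj : Function.Injective t) {K : Set Cz} (hK : IsCompact K) :
    phi t ht K = brownianLaw t (evalSeq ht '' K) := by
  rw [measure_eq_iInf_map_firstCoords _ (hK.image (continuous_evalSeq ht)), phi]
  simp only [brownianLaw_map_firstCoords (fun k => (ht k).1) htinj, firstCoords_image_evalSeq]

/-- Wiener measure on `Cz`, obtained by pulling the law of Brownian motion at the times `t` back
along evaluation; this requires the times to be distinct and dense. -/
def wienerMeasure : Measure Cz := (brownianLaw t).comap (evalSeq ht)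

lemma wienerMeasure_apply (htdense : Set.Icc (0 : ℝ) 1 ⊆ closure (Set.range t)) (A : Set Cz) :
    wienerMeasure ht A = brownianLaw t (evalSeq ht '' A) :=
  (measurableEmbedding_evalSeq ht htdense).comap_apply _ A

instance : IsFiniteMeasure (wienerMeasure ht) :=
  inferInstanceAs (IsFiniteMeasure ((brownianLaw t).comap (evalSeq ht)))

lemma mu_eq_wienerMeasure (htinj : Function.Injective t)
    (htdense : Set.Icc (0 : ℝ) 1 ⊆ closure (Set.range t)) {A : Set Cz} (hA : MeasurableSet A) :
    mu t ht A = wienerMeasure ht A := by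
  rw [hA.measure_eq_iSup_isCompact_of_ne_top (measure_ne_top _ A), mu]
  refine iSup_congr fun K => iSup_congr fun _ => iSup_congr fun hK => ?_
  rw [phi_eq_brownianLaw ht htinj hK, wienerMeasure_apply ht htdense]

lemma monotone_phi : Monotone (phi t ht) := fun _ _ hKL =>
  iInf_mono fun _ => measure_mono (image_mono hKL)

lemma mu_eq_phi_of_isCompact {K : Set Cz} (hK : IsCompact K) : mu t ht K = phi t ht K :=
  le_antisymm (iSup_le fun _ => iSup_le fun hLK => iSup_le fun _ => monotone_phi ht hLK)
    (le_iSup_of_le K (le_iSup₂_of_le Subset.rfl hK le_rfl))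

end Wiener

theorem stmt12_general (t : ℕ → ℝ) (ht : ∀ k, t k ∈ Set.Ioc (0 : ℝ) 1)
    (htinj : Function.Injective t)
    (htdense : Set.Icc (0 : ℝ) 1 ⊆ closure (Set.range t))
    (A : ℕ → Set Cz) (hA : ∀ m, MeasurableSet (A m)) (hmono : Monotone A) :
    Tendsto (fun m => mu t ht (A m)) atTop (𝓝 (mu t ht (⋃ m, A m))) ∧
      (IsCompact (⋃ m, A m) → mu t ht (⋃ m, A m) = phi t ht (⋃ m, A m)) := by
  refine ⟨?_, mu_eq_phi_of_isCompact ht⟩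
  have hmu : ∀ {B : Set Cz}, MeasurableSet B → mu t ht B = wienerMeasure ht B :=
    mu_eq_wienerMeasure ht htinj htdense
  simp only [hmu (hA _), hmu (MeasurableSet.iUnion hA)]
  exact tendsto_measure_iUnion_atTop hmono

/-- if Borel sets `A_m` increase with union the compact set `K`,
then `μ(A_m) → μ(K) = φ(K)`. -/
theorem stmt12 (t : ℕ → ℝ) (ht : ∀ k, t k ∈ Set.Ioc (0:ℝ) 1)
    (htinj : Function.Injective t)
    (htdense : Set.Icc (0:ℝ) 1 ⊆ closure (Set.range t))
    (A : ℕ → Set Cz) (hA : ∀ m, MeasurableSet (A m)) (hmono : Monotone A)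
    (K : Set Cz) (hK : IsCompact K) (hU : (⋃ m, A m) = K) :
    Tendsto (fun m => mu t ht (A m)) atTop (𝓝 (mu t ht K)) ∧
      mu t ht K = phi t ht K := by
  subst hU
  exact (stmt12_general t ht htinj htdense A hA hmono).imp_right fun hphi => hphi hK

end
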